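/- (Corollary 1) Suppose eTRS satisfies the Slater condition and (t*, λ*) with λ* ≥ 0 maximizes k(t,λ) := (Δ+1)λmin(D(t,λ)) − t − λc over t ∈ ℝ, λ ≥ 0. Then strong duality fails for eTRS (p* ≠ d*) if and only if the following all hold: (1) λmin(D(t*,λ*)) = λmin(A) < 0 and λ* > 0; (2) λmin(A) is a simple eigenvalue of A, and the linear system (A − λmin(A)·I)x = a − (λ*/2)b has two solutions x1 and x2 satisfying ‖x1‖² = Δ, ‖x2‖² = Δ, and (bᵀx1 − c)(bᵀx2 − c) < 0. -/

import Mathlib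

open Matrix

/-- The smallest eigenvalue of a real (symmetric) matrix. -/
noncomputable def lambdaMin {ι : Type} [Fintype ι] (M : Matrix ι ι ℝ) : ℝ :=
  sInf {μ : ℝ | ∃ v : ι → ℝ, v ≠ 0 ∧ M.mulVec v = μ • v}

/-- The multiplicity of the smallest eigenvalue: the dimension of Null(M - λmin(M)·I). -/
noncomputable def eigMult {ι : Type} [Fintype ι] [DecidableEq ι] (M : Matrix ι ι ℝ) : ℕ :=
  Module.finrank ℝ (LinearMap.ker (M - lambdaMin M • (1 : Matrix ι ι ℝ)).mulVecLin)

/-- The bordered matrix D(t) = [[t, -aᵀ],[-a, A]]. -/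
noncomputable def borderD {n : ℕ} (A : Matrix (Fin n) (Fin n) ℝ) (a : Fin n → ℝ) (t : ℝ) :
    Matrix (Unit ⊕ Fin n) (Unit ⊕ Fin n) ℝ :=
  Matrix.fromBlocks (Matrix.of fun (_ : Unit) (_ : Unit) => t)
    (Matrix.of fun (_ : Unit) (j : Fin n) => -a j)
    (Matrix.of fun (i : Fin n) (_ : Unit) => -a i) A

/-- The bordered matrix D(t,λ) = [[t, (-a + (λ/2)b)ᵀ],[-a + (λ/2)b, A]]. -/
noncomputable def borderD2 {n : ℕ} (A : Matrix (Fin n) (Fin n) ℝ) (a b : Fin n → ℝ)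
    (t l : ℝ) : Matrix (Unit ⊕ Fin n) (Unit ⊕ Fin n) ℝ :=
  borderD A (fun j => a j - (l / 2) * b j) t

/-- The objective xᵀAx - 2aᵀx. -/
noncomputable def objQ {n : ℕ} (A : Matrix (Fin n) (Fin n) ℝ) (a : Fin n → ℝ)
    (x : Fin n → ℝ) : ℝ :=
  x ⬝ᵥ A.mulVec x - 2 * (a ⬝ᵥ x)

/-- The optimal value p* of eTRS. -/
noncomputable def pstar {n : ℕ} (A : Matrix (Fin n) (Fin n) ℝ) (a b : Fin n → ℝ)
    (c Δ : ℝ) : ℝ :=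
  sInf {v : ℝ | ∃ x : Fin n → ℝ, x ⬝ᵥ x ≤ Δ ∧ b ⬝ᵥ x ≤ c ∧ v = objQ A a x}

/-- The Lagrangian of eTRS. -/
noncomputable def lagr {n : ℕ} (A : Matrix (Fin n) (Fin n) ℝ) (a b : Fin n → ℝ)
    (c Δ : ℝ) (x : Fin n → ℝ) (l1 l2 : ℝ) : ℝ :=
  objQ A a x + l1 * (x ⬝ᵥ x - Δ) + l2 * (b ⬝ᵥ x - c)

/-- The Lagrangian dual value d* of eTRS:
the supremum over λ1, λ2 ≥ 0 of inf_x of the Lagrangian, encoded as the supremum of all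
values that are lower bounds of the Lagrangian for some admissible multipliers. -/
noncomputable def dstar {n : ℕ} (A : Matrix (Fin n) (Fin n) ℝ) (a b : Fin n → ℝ)
    (c Δ : ℝ) : ℝ :=
  sSup {v : ℝ | ∃ l1 l2 : ℝ, 0 ≤ l1 ∧ 0 ≤ l2 ∧ ∀ x : Fin n → ℝ, v ≤ lagr A a b c Δ x l1 l2}

/-- x is a global optimal solution of eTRS. -/
def isOptimal {n : ℕ} (A : Matrix (Fin n) (Fin n) ℝ) (a b : Fin n → ℝ)
    (c Δ : ℝ) (x : Fin n → ℝ) : Prop :=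
  x ⬝ᵥ x ≤ Δ ∧ b ⬝ᵥ x ≤ c ∧
    ∀ y : Fin n → ℝ, y ⬝ᵥ y ≤ Δ → b ⬝ᵥ y ≤ c → objQ A a x ≤ objQ A a y

/-- The dual objective k(t,λ) = (Δ+1)·λmin(D(t,λ)) - t - λc. -/
noncomputable def ktl {n : ℕ} (A : Matrix (Fin n) (Fin n) ℝ) (a b : Fin n → ℝ)
    (c Δ : ℝ) (t l : ℝ) : ℝ :=
  (Δ + 1) * lambdaMin (borderD2 A a b t l) - t - l * c

/-!
If `A` is positive semidefinite, eTRS is convex and the Slater condition closes the gap. Let now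
`m = lambdaMin A < 0`. Every dual feasible `(l1, l2)` has `-m ≤ l1`, so the dual of eTRS
is, up to the shift of `l1` by `m`, the dual of the convex relaxation with matrix `A - m • 1`, which
has no duality gap. An optimal point `y` of the relaxation is therefore a KKT point of the
relaxation for the shifted optimal multipliers, whereas strong duality of eTRS means that eTRS
itself has a KKT point for the optimal multipliers; by the bordered matrices `D(t, l)` these are
`(-lambdaMin (D(ts, ls)), ls)`.

If `y` lies on the sphere it is such a KKT point. Otherwise the shifted multiplier vanishes, and one
can move from `y` along any eigenvector `w` of `m` until the sphere is reached; this yields a KKT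
point as soon as the halfspace constraint and its complementarity survive, i.e. unless `ls > 0` and
`b ⬝ᵥ w ≠ 0` for every such `w`. In that case `b` is injective on the eigenspace, which is then
a line, and the two points where the line through `y` meets the sphere lie strictly on
opposite sides of the hyperplane. Conversely, a line meets the sphere in at most two points, so that
two such points leave no room for a third one on the hyperplane.
-/

theorem spectrum_nonempty_of_isHermitian {ι 𝕜 : Type*} [Fintype ι] [DecidableEq ι] [Nonempty ι]
    [RCLike 𝕜] {M : Matrix ι ι 𝕜} (hM : M.IsHermitian) : (spectrum ℝ M).Nonempty :=
  ⟨_, hM.eigenvalues_mem_spectrum_real (Classical.arbitrary ι)⟩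

theorem isHermitian_add_smul_one {ι R : Type*} [DecidableEq ι] [CommRing R] [StarRing R]
    [TrivialStar R] {M : Matrix ι ι R} (hM : M.IsHermitian) (r : R) :
    (M + r • (1 : Matrix ι ι R)).IsHermitian :=
  hM.add (isHermitian_one.smul (.all r))

theorem isHermitian_sub_smul_one {ι R : Type*} [DecidableEq ι] [CommRing R] [StarRing R]
    [TrivialStar R] {M : Matrix ι ι R} (hM : M.IsHermitian) (r : R) :
    (M - r • (1 : Matrix ι ι R)).IsHermitian :=
  hM.sub (isHermitian_one.smul (.all r))

section LambdaMin

variable {ι : Type} [Fintype ι] {M : Matrix ι ι ℝ}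

theorem lambdaMin_eq_sInf_spectrum [DecidableEq ι] (M : Matrix ι ι ℝ) :
    lambdaMin M = sInf (spectrum ℝ M) := by
  unfold lambdaMin
  congr 1 with μ
  rw [Set.mem_ofPred_eq, ← spectrum_toLin', ← Module.End.hasEigenvalue_iff_mem_spectrum]
  refine ⟨fun ⟨v, hv, h⟩ => ?_, fun h => ?_⟩
  · exact Module.End.hasEigenvalue_of_hasEigenvector
      ⟨Module.End.mem_eigenspace_iff.2 (by rwa [toLin'_apply]), hv⟩
  · obtain ⟨v, hv⟩ := h.exists_hasEigenvector
    exact ⟨v, hv.2, by rw [← toLin'_apply, hv.apply_eq_smul]⟩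

theorem exists_mulVec_eq_lambdaMin_smul [Nonempty ι] (hM : M.IsHermitian) :
    ∃ v : ι → ℝ, v ≠ 0 ∧ M *ᵥ v = lambdaMin M • v := by
  classical
  have hmem : lambdaMin M ∈ spectrum ℝ M := lambdaMin_eq_sInf_spectrum M ▸
    (spectrum_nonempty_of_isHermitian hM).csInf_mem M.finite_real_spectrum
  rw [← spectrum_toLin', ← Module.End.hasEigenvalue_iff_mem_spectrum] at hmem
  obtain ⟨v, hv⟩ := hmem.exists_hasEigenvector
  exact ⟨v, hv.2, by rw [← toLin'_apply, hv.apply_eq_smul]⟩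

theorem posSemidef_sub_smul_one_iff [DecidableEq ι] [Nonempty ι] (hM : M.IsHermitian) {μ : ℝ} :
    (M - μ • (1 : Matrix ι ι ℝ)).PosSemidef ↔ μ ≤ lambdaMin M := by
  rw [posSemidef_iff_isHermitian_and_spectrum_nonneg, and_iff_right (isHermitian_sub_smul_one hM μ),
    ← Algebra.algebraMap_eq_smul_one, ← spectrum.sub_singleton_eq, lambdaMin_eq_sInf_spectrum,
    le_csInf_iff M.finite_real_spectrum.bddBelow (spectrum_nonempty_of_isHermitian hM)]
  simp [Set.subset_def]

theorem lambdaMin_of_isEmpty [IsEmpty ι] (M : Matrix ι ι ℝ) : lambdaMin M = 0 := by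
  simp [lambdaMin, Subsingleton.elim _ (0 : ι → ℝ)]

theorem posSemidef_iff_lambdaMin_nonneg (hM : M.IsHermitian) :
    M.PosSemidef ↔ 0 ≤ lambdaMin M := by
  classical
  rcases isEmpty_or_nonempty ι with _ | _
  · simp [lambdaMin_of_isEmpty, Subsingleton.elim M 0, PosSemidef.zero]
  · simpa using posSemidef_sub_smul_one_iff hM (μ := 0)

theorem nonempty_of_lambdaMin_neg (h : lambdaMin M < 0) : Nonempty ι := by
  by_contra hι
  rw [not_nonempty_iff] at hι
  exact h.ne (lambdaMin_of_isEmpty M)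

end LambdaMin

section Quadratic

variable {n : ℕ} {A : Matrix (Fin n) (Fin n) ℝ} {a : Fin n → ℝ}

theorem objQ_add (hA : A.IsHermitian) (a x h : Fin n → ℝ) :
    objQ A a (x + h) = objQ A a x + 2 * ((A *ᵥ x - a) ⬝ᵥ h) + h ⬝ᵥ A *ᵥ h := by
  have hsymm : x ⬝ᵥ A *ᵥ h = h ⬝ᵥ A *ᵥ x := by
    rw [← dotProduct_transpose_mulVec, ← conjTranspose_eq_transpose_of_trivial, hA.eq]
  simp only [objQ, mulVec_add, dotProduct_add, add_dotProduct, sub_dotProduct, hsymm,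
    dotProduct_comm (A *ᵥ x) h]
  ring

theorem objQ_smul (A : Matrix (Fin n) (Fin n) ℝ) (a x : Fin n → ℝ) (s : ℝ) :
    objQ A a (s • x) = s ^ 2 * (x ⬝ᵥ A *ᵥ x) - 2 * s * (a ⬝ᵥ x) := by
  simp only [objQ, mulVec_smul, dotProduct_smul, smul_dotProduct, smul_eq_mul]
  ring

theorem convexOn_objQ (hA : A.PosSemidef) (a : Fin n → ℝ) : ConvexOn ℝ Set.univ (objQ A a) := by
  refine ⟨convex_univ, fun x _ y _ α β hα hβ hαβ => ?_⟩
  have hxy : 0 ≤ α * β * ((x - y) ⬝ᵥ A *ᵥ (x - y)) :=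
    mul_nonneg (mul_nonneg hα hβ) (by simpa using hA.dotProduct_mulVec_nonneg (x - y))
  obtain rfl : β = 1 - α := by linarith
  simp only [objQ, mulVec_add, mulVec_sub, mulVec_smul, dotProduct_add, add_dotProduct,
    dotProduct_sub, sub_dotProduct, dotProduct_smul, smul_dotProduct, smul_eq_mul] at hxy ⊢
  linarith

theorem objQ_le_of_mulVec_eq (hA : A.PosSemidef) {x : Fin n → ℝ} (hx : A *ᵥ x = a)
    (z : Fin n → ℝ) : objQ A a x ≤ objQ A a z := by
  have hquad : 0 ≤ (z - x) ⬝ᵥ A *ᵥ (z - x) := by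
    simpa using hA.dotProduct_mulVec_nonneg (z - x)
  have hexp := objQ_add hA.isHermitian a x (z - x)
  rw [hx, sub_self, zero_dotProduct, add_sub_cancel] at hexp
  linarith

theorem mulVec_eq_of_forall_objQ_le (hA : A.IsHermitian) {x : Fin n → ℝ}
    (hx : ∀ z, objQ A a x ≤ objQ A a z) : A *ᵥ x = a := by
  set r := A *ᵥ x - a with hr
  have hline : ∀ s : ℝ, 0 ≤ (r ⬝ᵥ A *ᵥ r) * (s * s) + 2 * (r ⬝ᵥ r) * s + 0 := fun s => by
    have := (hx (x + s • r)).trans_eq (objQ_add hA a x (s • r))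
    rw [← hr] at this
    simp only [mulVec_smul, dotProduct_smul, smul_dotProduct, smul_eq_mul] at this
    linarith
  have hdiscrim := discrim_le_zero hline
  rw [discrim, mul_zero, sub_zero] at hdiscrim
  have hr0 : r ⬝ᵥ r = 0 := by
    have := pow_eq_zero_iff two_ne_zero |>.1 (hdiscrim.antisymm (sq_nonneg _))
    linarith
  exact sub_eq_zero.1 (dotProduct_self_eq_zero.1 hr0)

theorem posSemidef_of_forall_le_objQ (hA : A.IsHermitian) {v : ℝ} (hv : ∀ x, v ≤ objQ A a x) :
    A.PosSemidef := by
  refine .of_dotProduct_mulVec_nonneg hA fun x => ?_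
  rw [star_trivial]
  have hline : ∀ s : ℝ, 0 ≤ (x ⬝ᵥ A *ᵥ x) * (s * s) + -2 * (a ⬝ᵥ x) * s + (|v| + 1) := fun s => by
    have := (hv (s • x)).trans_eq (objQ_smul A a x s)
    linarith [neg_abs_le v]
  have hdiscrim := discrim_le_zero hline
  rw [discrim] at hdiscrim
  have hc : 0 < |v| + 1 := by positivity
  by_contra! hneg
  nlinarith [sq_nonneg (-2 * (a ⬝ᵥ x)), mul_pos_of_neg_of_neg hneg (neg_neg_of_pos hc)]

theorem isHermitian_borderD (hA : A.IsHermitian) (a : Fin n → ℝ) (t : ℝ) :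
    (borderD A a t).IsHermitian :=
  .fromBlocks (by ext; simp) (by ext; simp) hA

theorem sumElim_dotProduct_borderD_mulVec (A : Matrix (Fin n) (Fin n) ℝ) (a : Fin n → ℝ)
    (t τ : ℝ) (x : Fin n → ℝ) :
    Sum.elim (fun _ => τ) x ⬝ᵥ borderD A a t *ᵥ Sum.elim (fun _ => τ) x =
      t * τ ^ 2 - 2 * τ * (a ⬝ᵥ x) + x ⬝ᵥ A *ᵥ x := by
  have hrow : (of fun (_ : Unit) j => -a j) *ᵥ x = fun _ => -(a ⬝ᵥ x) :=
    funext fun _ => neg_dotProduct a x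
  have hcol : (of fun i (_ : Unit) => -a i) *ᵥ (fun _ => τ) = -τ • a := by
    ext i; simp [mulVec, dotProduct, mul_comm]
  have hcorner : (of fun (_ _ : Unit) => t) *ᵥ (fun _ => τ) = fun _ => t * τ := by
    ext; simp [mulVec, dotProduct]
  rw [borderD, fromBlocks_mulVec, sumElim_dotProduct_sumElim, Sum.elim_comp_inl, Sum.elim_comp_inr,
    hrow, hcol, hcorner, dotProduct_add, dotProduct_add, dotProduct_smul, dotProduct_comm x a]
  simp only [dotProduct, Finset.univ_unique, Finset.sum_singleton, smul_eq_mul]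
  ring

theorem posSemidef_borderD_iff (hA : A.IsHermitian) {t : ℝ} :
    (borderD A a t).PosSemidef ↔ ∀ x, -t ≤ objQ A a x := by
  refine ⟨fun h x => ?_, fun h => .of_dotProduct_mulVec_nonneg (isHermitian_borderD hA a t) ?_⟩
  · have := h.dotProduct_mulVec_nonneg (Sum.elim (fun _ => 1) x)
    rw [star_trivial, sumElim_dotProduct_borderD_mulVec] at this
    unfold objQ
    linarith
  · intro w
    obtain ⟨τ, x, rfl⟩ : ∃ (τ : ℝ) (x : Fin n → ℝ), w = Sum.elim (fun _ => τ) x :=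
      ⟨w (.inl ()), w ∘ .inr, (Sum.elim_comp_inl_inr w).symm⟩
    rw [star_trivial, sumElim_dotProduct_borderD_mulVec]
    rcases eq_or_ne τ 0 with rfl | hτ
    · simpa using (posSemidef_of_forall_le_objQ hA h).dotProduct_mulVec_nonneg x
    · have hscale : 0 ≤ τ ^ 2 * (t + objQ A a (τ⁻¹ • x)) :=
        mul_nonneg (sq_nonneg τ) (by linarith [h (τ⁻¹ • x)])
      rwa [objQ_smul, show τ ^ 2 * (t + (τ⁻¹ ^ 2 * (x ⬝ᵥ A *ᵥ x) - 2 * τ⁻¹ * (a ⬝ᵥ x))) =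
        t * τ ^ 2 - 2 * τ * (a ⬝ᵥ x) + x ⬝ᵥ A *ᵥ x by field_simp; ring] at hscale

end Quadratic

section ConvexProgram

theorem exists_forall_mem_dotProduct_pos {κ : Type*} [Fintype κ] {S : Set (κ → ℝ)}
    (hconv : Convex ℝ S) (hopen : IsOpen S) (h0 : 0 ∉ S) : ∃ w : κ → ℝ, ∀ p ∈ S, 0 < w ⬝ᵥ p := by
  classical
  obtain ⟨φ, hφ⟩ := geometric_hahn_banach_open_point hconv hopen h0
  refine ⟨fun i => -φ fun j => if i = j then 1 else 0, fun p hp => ?_⟩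
  have hφp := hφ p hp
  rw [map_zero, ← φ.coe_coe, LinearMap.pi_apply_eq_sum_univ] at hφp
  simpa [dotProduct, mul_comm] using hφp

theorem weights_nonneg_of_forall_add_dotProduct_pos {κ : Type*} [Fintype κ] {T : ℝ} {w : κ → ℝ}
    (h : ∀ ε : κ → ℝ, (∀ i, 0 < ε i) → 0 < T + w ⬝ᵥ ε) : 0 ≤ w := by
  classical
  intro i
  by_contra! hi
  rw [Pi.zero_apply] at hi
  set N := (T + w ⬝ᵥ 1) / -w i with hN
  have hN0 : 0 < N := div_pos (h 1 fun _ => one_pos) (neg_pos.2 hi)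
  have hNj : (0 : κ → ℝ) ≤ Pi.single i N := Pi.single_nonneg.2 hN0.le
  have hray := h (1 + Pi.single i N) fun j => add_pos_of_pos_of_nonneg one_pos (hNj j)
  have hNw : w i * N = -(T + w ⬝ᵥ 1) := by rw [hN]; field_simp [hi.ne]
  rw [dotProduct_add, dotProduct_single, hNw] at hray
  linarith

theorem const_nonneg_of_forall_add_dotProduct_pos {κ : Type*} [Fintype κ] {T : ℝ} {w : κ → ℝ}
    (h : ∀ ε : κ → ℝ, (∀ i, 0 < ε i) → 0 < T + w ⬝ᵥ ε) : 0 ≤ T := by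
  have hlim : Filter.Tendsto (fun s : ℝ => T + w ⬝ᵥ s • (1 : κ → ℝ)) (nhdsWithin 0 (Set.Ioi 0))
      (nhds T) := by
    have hcont : Continuous fun s : ℝ => T + w ⬝ᵥ s • (1 : κ → ℝ) := by fun_prop
    simpa using (hcont.tendsto 0).mono_left nhdsWithin_le_nhds
  refine ge_of_tendsto hlim (eventually_mem_nhdsWithin.mono fun s hs => (h _ fun i => ?_).le)
  simpa using hs

variable {κ V : Type*} [AddCommGroup V] [Module ℝ V] {C : Set V}

/-- The values `p` that some point of `C` strictly undercuts in every component of `g`; this is the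
open convex set separated from the origin in the convex alternative. -/
def strictUpperImage {κ V : Type*} (C : Set V) (g : κ → V → ℝ) : Set (κ → ℝ) :=
  {p | ∃ x ∈ C, ∀ i, g i x < p i}

theorem isOpen_strictUpperImage {κ V : Type*} [Finite κ] (C : Set V) (g : κ → V → ℝ) :
    IsOpen (strictUpperImage C g) := by
  have hunion : strictUpperImage C g = ⋃ x ∈ C, Set.univ.pi fun i => Set.Ioi (g i x) := by
    ext p; simp [strictUpperImage]
  rw [hunion]
  exact isOpen_biUnion fun x _ => isOpen_set_pi Set.finite_univ fun i _ => isOpen_Ioi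

theorem convex_strictUpperImage {g : κ → V → ℝ} (hC : Convex ℝ C)
    (hg : ∀ i, ConvexOn ℝ C (g i)) : Convex ℝ (strictUpperImage C g) := by
  rw [convex_iff_forall_pos]
  rintro p ⟨x, hx, hxp⟩ q ⟨y, hy, hyq⟩ α β hα hβ hαβ
  refine ⟨α • x + β • y, hC hx hy hα.le hβ.le hαβ, fun i => ?_⟩
  calc g i (α • x + β • y) ≤ α • g i x + β • g i y := (hg i).2 hx hy hα.le hβ.le hαβ
    _ < α • p i + β • q i := by
      simp only [smul_eq_mul]
      gcongr
      exacts [hxp i, hyq i]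

/-- The convex alternative of Fan, Glicksberg and Hoffman. -/
theorem exists_nonneg_forall_dotProduct_nonneg [Fintype κ] {g : κ → V → ℝ} (hC : Convex ℝ C)
    (hne : C.Nonempty) (hg : ∀ i, ConvexOn ℝ C (g i)) (hno : ∀ x ∈ C, ∃ i, 0 ≤ g i x) :
    ∃ w : κ → ℝ, 0 ≤ w ∧ w ≠ 0 ∧ ∀ x ∈ C, 0 ≤ w ⬝ᵥ fun i => g i x := by
  have h0 : (0 : κ → ℝ) ∉ strictUpperImage C g := fun ⟨x, hx, hlt⟩ =>
    let ⟨i, hi⟩ := hno x hx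
    (hlt i).not_ge hi
  obtain ⟨w, hw⟩ := exists_forall_mem_dotProduct_pos (convex_strictUpperImage hC hg)
    (isOpen_strictUpperImage C g) h0
  have hw_above : ∀ x ∈ C, ∀ ε : κ → ℝ, (∀ i, 0 < ε i) → 0 < w ⬝ᵥ (fun i => g i x) + w ⬝ᵥ ε :=
    fun x hx ε hε => by
      rw [← dotProduct_add]
      exact hw _ ⟨x, hx, fun i => lt_add_of_pos_right _ (hε i)⟩
  obtain ⟨x₀, hx₀⟩ := hne
  refine ⟨w, weights_nonneg_of_forall_add_dotProduct_pos (hw_above x₀ hx₀), ?_, fun x hx =>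
    const_nonneg_of_forall_add_dotProduct_pos (hw_above x hx)⟩
  rintro rfl
  simpa only [zero_dotProduct, add_zero, lt_irrefl] using hw_above x₀ hx₀ 1 fun _ => one_pos

theorem exists_lagrangeMultipliers_of_convexOn [Fintype κ] {f : V → ℝ} {g : κ → V → ℝ}
    (hf : ConvexOn ℝ C f) (hg : ∀ i, ConvexOn ℝ C (g i)) (hslater : ∃ x ∈ C, ∀ i, g i x < 0)
    {v : ℝ} (hv : ∀ x ∈ C, (∀ i, g i x ≤ 0) → v ≤ f x) :
    ∃ w : κ → ℝ, 0 ≤ w ∧ ∀ x ∈ C, v ≤ f x + w ⬝ᵥ fun i => g i x := by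
  obtain ⟨x₀, hx₀, hlt⟩ := hslater
  let G : Option κ → V → ℝ := fun o => o.elim (fun x => f x - v) g
  have hG : ∀ o, ConvexOn ℝ C (G o) := by
    rintro (_ | i)
    exacts [hf.sub (concaveOn_const v hf.1), hg i]
  have hno : ∀ x ∈ C, ∃ o, 0 ≤ G o x := fun x hx => by
    by_contra! hneg
    have hvf := hv x hx fun i => (hneg (some i)).le
    exact (hneg none).not_ge (sub_nonneg.2 hvf)
  obtain ⟨w, hw, hw0, hwG⟩ := exists_nonneg_forall_dotProduct_nonneg hf.1 ⟨x₀, hx₀⟩ hG hno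
  have hwG' : ∀ x ∈ C, 0 ≤ w none * (f x - v) + (fun i => w (some i)) ⬝ᵥ fun i => g i x :=
    fun x hx => by simpa [dotProduct, Fintype.sum_option, G] using hwG x hx
  have hnone : 0 < w none := by
    refine (hw none).lt_of_ne' fun hnone => hw0 ?_
    have hterm : ∀ i, w (some i) * g i x₀ ≤ 0 := fun i =>
      mul_nonpos_of_nonneg_of_nonpos (hw _) (hlt i).le
    have hsum : ∑ i, w (some i) * g i x₀ = 0 :=
      (Finset.sum_nonpos fun i _ => hterm i).antisymm (by
        simpa [hnone, dotProduct] using hwG' x₀ hx₀)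
    ext (_ | i)
    · exact hnone
    · have := (Finset.sum_eq_zero_iff_of_nonpos fun i _ => hterm i).1 hsum i (Finset.mem_univ i)
      exact (mul_eq_zero.1 this).resolve_right (hlt i).ne
  refine ⟨(w none)⁻¹ • fun i => w (some i),
    smul_nonneg (inv_nonneg.2 hnone.le) fun i => hw (some i), fun x hx => ?_⟩
  have hscaled := mul_nonneg (inv_nonneg.2 hnone.le) (hwG' x hx)
  rw [mul_add, inv_mul_cancel_left₀ hnone.ne'] at hscaled
  rw [smul_dotProduct, smul_eq_mul]
  linarith

end ConvexProgram

section Primal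

variable {n : ℕ} {A : Matrix (Fin n) (Fin n) ℝ} {a b : Fin n → ℝ} {c Δ : ℝ}

theorem isCompact_setOf_dotProduct_self_le {ι : Type*} [Fintype ι] (Δ : ℝ) :
    IsCompact {x : ι → ℝ | x ⬝ᵥ x ≤ Δ} := by
  refine Metric.isCompact_of_isClosed_isBounded (isClosed_le (by fun_prop) continuous_const) ?_
  refine (Metric.isBounded_closedBall (x := (0 : ι → ℝ)) (r := √Δ)).subset fun x hx => ?_
  rw [mem_closedBall_zero_iff, pi_norm_le_iff_of_nonneg (Real.sqrt_nonneg _)]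
  refine fun i => Real.abs_le_sqrt (le_trans ?_ hx)
  rw [sq]
  exact Finset.single_le_sum (f := fun i => x i * x i) (fun j _ => mul_self_nonneg _)
    (Finset.mem_univ i)

theorem exists_isOptimal (A : Matrix (Fin n) (Fin n) ℝ) (a : Fin n → ℝ)
    (hfeas : ∃ x : Fin n → ℝ, x ⬝ᵥ x ≤ Δ ∧ b ⬝ᵥ x ≤ c) : ∃ x, isOptimal A a b c Δ x := by
  have hcompact : IsCompact ({x : Fin n → ℝ | x ⬝ᵥ x ≤ Δ} ∩ {x | b ⬝ᵥ x ≤ c}) :=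
    (isCompact_setOf_dotProduct_self_le Δ).inter_right (isClosed_le (by fun_prop) continuous_const)
  have hcont : Continuous (objQ A a) := by
    unfold objQ
    fun_prop
  obtain ⟨x, ⟨hxΔ, hxc⟩, hmin⟩ := hcompact.exists_isMinOn hfeas hcont.continuousOn
  exact ⟨x, hxΔ, hxc, fun y hyΔ hyc => hmin ⟨hyΔ, hyc⟩⟩

theorem pstar_eq_of_isOptimal {x : Fin n → ℝ} (hx : isOptimal A a b c Δ x) :
    pstar A a b c Δ = objQ A a x := by
  refine IsLeast.csInf_eq ⟨⟨x, hx.1, hx.2.1, rfl⟩, ?_⟩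
  rintro v ⟨y, hyΔ, hyc, rfl⟩
  exact hx.2.2 y hyΔ hyc

end Primal

section Dual

variable {n : ℕ} {A : Matrix (Fin n) (Fin n) ℝ} {a b x : Fin n → ℝ} {c Δ l1 l2 v : ℝ}

/-- The multipliers `(l1, l2)` are dual feasible and certify `v` as a lower bound of the Lagrangian
dual function; `dstar` is the supremum of all such `v`. -/
def IsDualBound {n : ℕ} (A : Matrix (Fin n) (Fin n) ℝ) (a b : Fin n → ℝ) (c Δ l1 l2 v : ℝ) : Prop :=
  0 ≤ l1 ∧ 0 ≤ l2 ∧ ∀ x : Fin n → ℝ, v ≤ lagr A a b c Δ x l1 l2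

/-- `x` is a Karush–Kuhn–Tucker point of eTRS for the multipliers `(l1, l2)`. Dual feasibility
`0 ≤ l1`, `0 ≤ l2` is not part of the notion. -/
structure IsKKTPoint {n : ℕ} (A : Matrix (Fin n) (Fin n) ℝ) (a b : Fin n → ℝ)
    (c Δ l1 l2 : ℝ) (x : Fin n → ℝ) : Prop where
  dotProduct_self_le : x ⬝ᵥ x ≤ Δ
  dotProduct_le : b ⬝ᵥ x ≤ c
  stationary : (A + l1 • (1 : Matrix (Fin n) (Fin n) ℝ)) *ᵥ x = a - (l2 / 2) • b
  ball_slack : l1 * (x ⬝ᵥ x - Δ) = 0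
  halfspace_slack : l2 * (b ⬝ᵥ x - c) = 0

theorem lagr_eq_objQ (A : Matrix (Fin n) (Fin n) ℝ) (a b : Fin n → ℝ) (c Δ : ℝ) (x : Fin n → ℝ)
    (l1 l2 : ℝ) : lagr A a b c Δ x l1 l2 =
      objQ (A + l1 • (1 : Matrix (Fin n) (Fin n) ℝ)) (a - (l2 / 2) • b) x - l1 * Δ - l2 * c := by
  simp only [lagr, objQ, add_mulVec, smul_mulVec, one_mulVec, dotProduct_add, sub_dotProduct,
    dotProduct_smul, smul_dotProduct, smul_eq_mul]
  ring

theorem lagr_sub_smul_one (A : Matrix (Fin n) (Fin n) ℝ) (a b : Fin n → ℝ) (c Δ σ : ℝ)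
    (x : Fin n → ℝ) (l1 l2 : ℝ) :
    lagr (A - σ • (1 : Matrix (Fin n) (Fin n) ℝ)) a b c Δ x l1 l2 =
      lagr A a b c Δ x (l1 - σ) l2 - σ * Δ := by
  simp only [lagr, objQ, sub_mulVec, smul_mulVec, one_mulVec, dotProduct_sub, dotProduct_smul,
    smul_eq_mul]
  ring

theorem IsDualBound.le_objQ (hd : IsDualBound A a b c Δ l1 l2 v) (hxΔ : x ⬝ᵥ x ≤ Δ)
    (hxc : b ⬝ᵥ x ≤ c) : v ≤ objQ A a x := by
  obtain ⟨h1, h2, hv⟩ := hd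
  have hball := mul_nonneg h1 (sub_nonneg.2 hxΔ)
  have hhalf := mul_nonneg h2 (sub_nonneg.2 hxc)
  have hlagr := hv x
  unfold lagr at hlagr
  linarith

theorem IsDualBound.posSemidef (hd : IsDualBound A a b c Δ l1 l2 v) (hA : A.IsHermitian) :
    (A + l1 • (1 : Matrix (Fin n) (Fin n) ℝ)).PosSemidef := by
  refine posSemidef_of_forall_le_objQ (isHermitian_add_smul_one hA l1) (a := a - (l2 / 2) • b)
    (v := v + l1 * Δ + l2 * c) fun x => ?_
  linarith [hd.2.2 x, lagr_eq_objQ A a b c Δ x l1 l2]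

theorem IsDualBound.isKKTPoint (hd : IsDualBound A a b c Δ l1 l2 (objQ A a x)) (hA : A.IsHermitian)
    (hxΔ : x ⬝ᵥ x ≤ Δ) (hxc : b ⬝ᵥ x ≤ c) : IsKKTPoint A a b c Δ l1 l2 x := by
  obtain ⟨h1, h2, hv⟩ := hd
  have hball := mul_nonneg h1 (sub_nonneg.2 hxΔ)
  have hhalf := mul_nonneg h2 (sub_nonneg.2 hxc)
  have hlagr := hv x
  unfold lagr at hlagr
  refine ⟨hxΔ, hxc, mulVec_eq_of_forall_objQ_le (isHermitian_add_smul_one hA l1) fun z => ?_,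
    by linarith, by linarith⟩
  have hz := hv z
  have hxlagr : lagr A a b c Δ x l1 l2 ≤ objQ A a x := by
    unfold lagr
    linarith
  rw [lagr_eq_objQ] at hz hxlagr
  linarith

theorem IsKKTPoint.isDualBound (hx : IsKKTPoint A a b c Δ l1 l2 x) (h1 : 0 ≤ l1) (h2 : 0 ≤ l2)
    (hpsd : (A + l1 • (1 : Matrix (Fin n) (Fin n) ℝ)).PosSemidef) :
    IsDualBound A a b c Δ l1 l2 (objQ A a x) := by
  refine ⟨h1, h2, fun z => ?_⟩
  calc objQ A a x = lagr A a b c Δ x l1 l2 := by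
        rw [lagr, hx.ball_slack, hx.halfspace_slack, add_zero, add_zero]
    _ ≤ lagr A a b c Δ z l1 l2 := by
        rw [lagr_eq_objQ, lagr_eq_objQ]
        gcongr
        exact objQ_le_of_mulVec_eq hpsd hx.stationary z

theorem IsKKTPoint.dotProduct_self_eq (hx : IsKKTPoint A a b c Δ l1 l2 x) (h1 : l1 ≠ 0) :
    x ⬝ᵥ x = Δ :=
  sub_eq_zero.1 ((mul_eq_zero.1 hx.ball_slack).resolve_left h1)

theorem IsKKTPoint.dotProduct_eq (hx : IsKKTPoint A a b c Δ l1 l2 x) (h2 : l2 ≠ 0) :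
    b ⬝ᵥ x = c :=
  sub_eq_zero.1 ((mul_eq_zero.1 hx.halfspace_slack).resolve_left h2)

theorem IsDualBound.pstar_eq (hd : IsDualBound A a b c Δ l1 l2 (objQ A a x)) (hxΔ : x ⬝ᵥ x ≤ Δ)
    (hxc : b ⬝ᵥ x ≤ c) : pstar A a b c Δ = objQ A a x :=
  pstar_eq_of_isOptimal ⟨hxΔ, hxc, fun _ => hd.le_objQ⟩

theorem IsDualBound.dstar_eq (hd : IsDualBound A a b c Δ l1 l2 (objQ A a x)) (hxΔ : x ⬝ᵥ x ≤ Δ)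
    (hxc : b ⬝ᵥ x ≤ c) : dstar A a b c Δ = objQ A a x :=
  IsGreatest.csSup_eq ⟨⟨l1, l2, hd⟩, fun _ ⟨_, _, hw⟩ => IsDualBound.le_objQ hw hxΔ hxc⟩

theorem IsDualBound.le_dstar (hd : IsDualBound A a b c Δ l1 l2 v)
    (hfeas : ∃ x : Fin n → ℝ, x ⬝ᵥ x ≤ Δ ∧ b ⬝ᵥ x ≤ c) : v ≤ dstar A a b c Δ := by
  obtain ⟨x, hxΔ, hxc⟩ := hfeas
  exact le_csSup ⟨objQ A a x, fun _ ⟨_, _, hw⟩ => IsDualBound.le_objQ hw hxΔ hxc⟩ ⟨l1, l2, hd⟩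

theorem pstar_eq_dstar_iff_exists_isKKTPoint (hA : A.IsHermitian)
    (hfeas : ∃ x : Fin n → ℝ, x ⬝ᵥ x ≤ Δ ∧ b ⬝ᵥ x ≤ c)
    (hd : IsDualBound A a b c Δ l1 l2 (dstar A a b c Δ)) :
    pstar A a b c Δ = dstar A a b c Δ ↔ ∃ x, IsKKTPoint A a b c Δ l1 l2 x := by
  constructor
  · intro hstrong
    obtain ⟨x, hx⟩ := exists_isOptimal A a hfeas
    rw [← hstrong, pstar_eq_of_isOptimal hx] at hd
    exact ⟨x, hd.isKKTPoint hA hx.1 hx.2.1⟩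
  · rintro ⟨x, hx⟩
    have hdx := hx.isDualBound hd.1 hd.2.1 (hd.posSemidef hA)
    rw [hdx.pstar_eq hx.dotProduct_self_le hx.dotProduct_le,
      hdx.dstar_eq hx.dotProduct_self_le hx.dotProduct_le]

theorem exists_isDualBound_of_posSemidef (hA : A.PosSemidef)
    (hslater : ∃ x : Fin n → ℝ, x ⬝ᵥ x < Δ ∧ b ⬝ᵥ x < c) (hx : isOptimal A a b c Δ x) :
    ∃ l1 l2, IsDualBound A a b c Δ l1 l2 (objQ A a x) := by
  have hball : ConvexOn ℝ Set.univ fun z : Fin n → ℝ => z ⬝ᵥ z - Δ := by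
    have := (convexOn_objQ PosSemidef.one (0 : Fin n → ℝ)).sub (concaveOn_const Δ convex_univ)
    exact this.congr fun z _ => by simp [objQ]
  have hhalf : ConvexOn ℝ Set.univ fun z : Fin n → ℝ => b ⬝ᵥ z - c :=
    ((dotProductBilin ℝ ℝ b).convexOn convex_univ).sub (concaveOn_const c convex_univ)
  obtain ⟨x₀, hx₀Δ, hx₀c⟩ := hslater
  obtain ⟨w, hw, hwle⟩ := exists_lagrangeMultipliers_of_convexOn (v := objQ A a x)
    (g := ![fun z => z ⬝ᵥ z - Δ, fun z => b ⬝ᵥ z - c]) (convexOn_objQ hA a)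
    (Fin.forall_fin_two.2 ⟨hball, hhalf⟩)
    ⟨x₀, Set.mem_univ _, Fin.forall_fin_two.2 ⟨sub_neg.2 hx₀Δ, sub_neg.2 hx₀c⟩⟩
    fun z _ hz => hx.2.2 z (sub_nonpos.1 (hz 0)) (sub_nonpos.1 (hz 1))
  refine ⟨w 0, w 1, hw 0, hw 1, fun z => (hwle z (Set.mem_univ z)).trans_eq ?_⟩
  simp [lagr, dotProduct, Fin.sum_univ_two, add_assoc]

theorem pstar_eq_dstar_of_posSemidef (hA : A.PosSemidef)
    (hslater : ∃ x : Fin n → ℝ, x ⬝ᵥ x < Δ ∧ b ⬝ᵥ x < c) :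
    pstar A a b c Δ = dstar A a b c Δ := by
  obtain ⟨x, hx⟩ := exists_isOptimal A a (hslater.imp fun _ h => ⟨h.1.le, h.2.le⟩)
  obtain ⟨l1, l2, hd⟩ := exists_isDualBound_of_posSemidef hA hslater hx
  rw [hd.pstar_eq hx.1 hx.2.1, hd.dstar_eq hx.1 hx.2.1]

theorem exists_isKKTPoint_relaxation (hA : A.IsHermitian)
    (hslater : ∃ x : Fin n → ℝ, x ⬝ᵥ x < Δ ∧ b ⬝ᵥ x < c) (hneg : lambdaMin A < 0)
    (hd : IsDualBound A a b c Δ l1 l2 (dstar A a b c Δ)) :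
    ∃ y, IsKKTPoint (A - lambdaMin A • (1 : Matrix (Fin n) (Fin n) ℝ)) a b c Δ
      (l1 + lambdaMin A) l2 y := by
  have := nonempty_of_lambdaMin_neg hneg
  set m := lambdaMin A
  set B := A - m • (1 : Matrix (Fin n) (Fin n) ℝ)
  have hB : B.PosSemidef := (posSemidef_sub_smul_one_iff hA).2 le_rfl
  have hfeas : ∃ x : Fin n → ℝ, x ⬝ᵥ x ≤ Δ ∧ b ⬝ᵥ x ≤ c :=
    hslater.imp fun _ h => ⟨h.1.le, h.2.le⟩
  obtain ⟨y, hy⟩ := exists_isOptimal B a hfeas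
  obtain ⟨k1, k2, hk1, hk2, hk⟩ := exists_isDualBound_of_posSemidef hB hslater hy
  have hshift : IsDualBound A a b c Δ (k1 - m) k2 (objQ B a y + m * Δ) :=
    ⟨by linarith, hk2, fun x => by linarith [hk x, lagr_sub_smul_one A a b c Δ m x k1 k2]⟩
  have hle_dstar : objQ B a y + m * Δ ≤ dstar A a b c Δ := hshift.le_dstar hfeas
  have hml1 : -l1 ≤ m := by
    rw [← posSemidef_sub_smul_one_iff hA, neg_smul, sub_neg_eq_add]
    exact hd.posSemidef hA
  have hdB : IsDualBound B a b c Δ (l1 + m) l2 (objQ B a y) := by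
    refine ⟨by linarith, hd.2.1, fun x => ?_⟩
    rw [lagr_sub_smul_one, add_sub_cancel_right]
    linarith [hd.2.2 x]
  exact ⟨y, hdB.isKKTPoint hB.isHermitian hy.1 hy.2.1⟩

end Dual

section EigenvalueDual

variable {n : ℕ} {A : Matrix (Fin n) (Fin n) ℝ} {a b : Fin n → ℝ} {c Δ t l μ : ℝ}

theorem borderD2_sub_smul_one (A : Matrix (Fin n) (Fin n) ℝ) (a b : Fin n → ℝ) (t l μ : ℝ) :
    borderD2 A a b t l - μ • (1 : Matrix (Unit ⊕ Fin n) (Unit ⊕ Fin n) ℝ) =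
      borderD (A - μ • (1 : Matrix (Fin n) (Fin n) ℝ)) (a - (l / 2) • b) (t - μ) := by
  ext (_ | i) (_ | j) <;> simp [borderD2, borderD, one_apply]

theorem le_lambdaMin_borderD2_iff (hA : A.IsHermitian) :
    μ ≤ lambdaMin (borderD2 A a b t l) ↔
      ∀ x, (Δ + 1) * μ - t - l * c ≤ lagr A a b c Δ x (-μ) l := by
  rw [← posSemidef_sub_smul_one_iff (M := borderD2 A a b t l) (isHermitian_borderD hA _ t),
    borderD2_sub_smul_one, posSemidef_borderD_iff (isHermitian_sub_smul_one hA μ)]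
  refine forall_congr' fun x => ?_
  rw [lagr_eq_objQ, neg_smul, ← sub_eq_add_neg]
  constructor <;> intro h <;> linarith

theorem lambdaMin_borderD2_le [Nonempty (Fin n)] (hA : A.IsHermitian) (a b : Fin n → ℝ)
    (t l : ℝ) : lambdaMin (borderD2 A a b t l) ≤ lambdaMin A := by
  have hborder := (posSemidef_sub_smul_one_iff (M := borderD2 A a b t l)
    (isHermitian_borderD hA _ t)).2 le_rfl
  rw [borderD2_sub_smul_one] at hborder
  exact (posSemidef_sub_smul_one_iff hA).1 (hborder.submatrix Sum.inr)

theorem isDualBound_ktl (hA : A.IsHermitian) (hl : 0 ≤ l)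
    (hneg : lambdaMin (borderD2 A a b t l) ≤ 0) :
    IsDualBound A a b c Δ (-lambdaMin (borderD2 A a b t l)) l (ktl A a b c Δ t l) :=
  ⟨neg_nonneg.2 hneg, hl, (le_lambdaMin_borderD2_iff hA).1 le_rfl⟩

theorem IsDualBound.exists_le_ktl {l1 l2 v : ℝ} (hd : IsDualBound A a b c Δ l1 l2 v)
    (hA : A.IsHermitian) (hΔ : 0 ≤ Δ) : ∃ t, v ≤ ktl A a b c Δ t l2 := by
  set t := -(l1 * Δ) - l2 * c - v - l1 with ht
  have hμ : -l1 ≤ lambdaMin (borderD2 A a b t l2) :=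
    (le_lambdaMin_borderD2_iff hA (c := c) (Δ := Δ)).2 fun x => by
      rw [neg_neg]
      linarith [hd.2.2 x]
  refine ⟨t, ?_⟩
  calc v = (Δ + 1) * -l1 - t - l2 * c := by rw [ht]; ring
    _ ≤ ktl A a b c Δ t l2 := by unfold ktl; gcongr

theorem isDualBound_dstar_of_forall_ktl_le (hA : A.IsHermitian) (hΔ : 0 ≤ Δ) (hl : 0 ≤ l)
    (hneg : lambdaMin (borderD2 A a b t l) ≤ 0)
    (hmax : ∀ t' l', 0 ≤ l' → ktl A a b c Δ t' l' ≤ ktl A a b c Δ t l) :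
    IsDualBound A a b c Δ (-lambdaMin (borderD2 A a b t l)) l (dstar A a b c Δ) := by
  have hd := isDualBound_ktl hA hl hneg (c := c) (Δ := Δ)
  have hdstar : dstar A a b c Δ = ktl A a b c Δ t l := by
    refine IsGreatest.csSup_eq ⟨⟨_, _, hd⟩, ?_⟩
    rintro v ⟨l1, l2, hv⟩
    obtain ⟨t', ht'⟩ := IsDualBound.exists_le_ktl hv hA hΔ
    exact ht'.trans (hmax t' l2 hv.2.1)
  rwa [hdstar]

end EigenvalueDual

section Geometry

theorem dotProduct_self_add_smul {ι R : Type*} [Fintype ι] [CommRing R] (x u : ι → R) (s : R) :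
    (x + s • u) ⬝ᵥ (x + s • u) = u ⬝ᵥ u * (s * s) + 2 * (x ⬝ᵥ u) * s + x ⬝ᵥ x := by
  simp only [dotProduct_add, add_dotProduct, dotProduct_smul, smul_dotProduct, smul_eq_mul,
    dotProduct_comm u x]
  ring

theorem exists_pos_dotProduct_self_add_smul_eq {ι : Type*} [Fintype ι] {y u : ι → ℝ} {Δ : ℝ}
    (hy : y ⬝ᵥ y < Δ) (hu : u ≠ 0) : ∃ s : ℝ, 0 < s ∧ (y + s • u) ⬝ᵥ (y + s • u) = Δ := by
  simp only [dotProduct_self_add_smul]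
  have hp : 0 < u ⬝ᵥ u := by simpa using dotProduct_star_self_pos_iff.2 hu
  have hdiscrim : (2 * (y ⬝ᵥ u)) ^ 2 < discrim (u ⬝ᵥ u) (2 * (y ⬝ᵥ u)) (y ⬝ᵥ y - Δ) := by
    rw [discrim]
    nlinarith
  have hroot : 2 * (y ⬝ᵥ u) < √(discrim (u ⬝ᵥ u) (2 * (y ⬝ᵥ u)) (y ⬝ᵥ y - Δ)) :=
    Real.lt_sqrt_of_sq_lt hdiscrim
  refine ⟨(-(2 * (y ⬝ᵥ u)) + √(discrim (u ⬝ᵥ u) (2 * (y ⬝ᵥ u)) (y ⬝ᵥ y - Δ))) / (2 * (u ⬝ᵥ u)),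
    div_pos (by linarith) (by linarith), ?_⟩
  rw [← sub_eq_zero, add_sub_assoc, quadratic_eq_zero_iff hp.ne'
    (Real.mul_self_sqrt ((sq_nonneg _).trans hdiscrim.le)).symm]
  exact .inl rfl

theorem eq_zero_or_one_of_dotProduct_self_eq {ι R : Type*} [Fintype ι] [CommRing R] [LinearOrder R]
    [IsStrictOrderedRing R] {x u : ι → R} {s : R} (hu : u ≠ 0)
    (h1 : (x + u) ⬝ᵥ (x + u) = x ⬝ᵥ x) (hs : (x + s • u) ⬝ᵥ (x + s • u) = x ⬝ᵥ x) :
    s = 0 ∨ s = 1 := by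
  have h1' := dotProduct_self_add_smul x u 1
  rw [one_smul, h1] at h1'
  rw [dotProduct_self_add_smul] at hs
  have hprod : s * ((s - 1) * (u ⬝ᵥ u)) = 0 := by linear_combination hs + s * h1'
  rcases mul_eq_zero.1 hprod with h | h
  · exact .inl h
  · exact .inr (sub_eq_zero.1 ((mul_eq_zero.1 h).resolve_right (dotProduct_self_eq_zero.not.2 hu)))

theorem finrank_eq_one_of_disjoint_ker {K V : Type*} [Field K] [AddCommGroup V] [Module K V]
    {W : Submodule K V} (hW : W ≠ ⊥) {φ : V →ₗ[K] K} (hφ : Disjoint W (LinearMap.ker φ)) :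
    Module.finrank K W = 1 := by
  have hinj : Function.Injective (φ.domRestrict W) :=
    LinearMap.injective_domRestrict_iff.2 hφ
  have hsurj : Function.Surjective (φ.domRestrict W) := by
    obtain ⟨w, hw, hw0⟩ := W.ne_bot_iff.1 hW
    refine LinearMap.surjective fun h => hw0 (LinearMap.disjoint_ker.1 hφ w hw ?_)
    simpa using LinearMap.congr_fun h ⟨w, hw⟩
  rw [(LinearEquiv.ofBijective _ ⟨hinj, hsurj⟩).finrank_eq, Module.finrank_self]

end Geometry

section Eigenspace

variable {ι : Type*} [Fintype ι] [DecidableEq ι]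

theorem mem_ker_sub_smul_one_iff {R : Type*} [CommRing R] {A : Matrix ι ι R} {w : ι → R} {σ : R} :
    w ∈ LinearMap.ker (A - σ • (1 : Matrix ι ι R)).mulVecLin ↔ A *ᵥ w = σ • w := by
  rw [LinearMap.mem_ker, mulVecLin_apply, sub_mulVec, smul_mulVec, one_mulVec, sub_eq_zero]

theorem sub_smul_one_mulVec_add_smul {R : Type*} [CommRing R] {A : Matrix ι ι R} {w : ι → R} {σ : R}
    (hAw : A *ᵥ w = σ • w) (y : ι → R) (s : R) :
    (A - σ • (1 : Matrix ι ι R)) *ᵥ (y + s • w) = (A - σ • (1 : Matrix ι ι R)) *ᵥ y := by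
  have hker : (A - σ • (1 : Matrix ι ι R)) *ᵥ w = 0 := mem_ker_sub_smul_one_iff.2 hAw
  rw [mulVec_add, mulVec_smul, hker, smul_zero, add_zero]

theorem finrank_ker_sub_smul_one_eq_one {K : Type*} [Field K] {A : Matrix ι ι K} {b w : ι → K}
    {σ : K} (hw : w ≠ 0) (hAw : A *ᵥ w = σ • w) (hb : ∀ u, u ≠ 0 → A *ᵥ u = σ • u → b ⬝ᵥ u ≠ 0) :
    Module.finrank K (LinearMap.ker (A - σ • (1 : Matrix ι ι K)).mulVecLin) = 1 := by
  refine finrank_eq_one_of_disjoint_ker (φ := dotProductBilin K K b)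
    ((Submodule.ne_bot_iff _).2 ⟨w, mem_ker_sub_smul_one_iff.2 hAw, hw⟩)
    (LinearMap.disjoint_ker.2 fun u hu hbu => ?_)
  by_contra hu0
  exact hb u hu0 (mem_ker_sub_smul_one_iff.1 hu) hbu

theorem exists_sphere_pair_of_mulVec_eq_smul {A : Matrix ι ι ℝ} {b w y : ι → ℝ} {c Δ σ : ℝ}
    (hAw : A *ᵥ w = σ • w) (hbw : b ⬝ᵥ w ≠ 0) (hyΔ : y ⬝ᵥ y < Δ) (hyc : b ⬝ᵥ y = c) :
    ∃ x1 x2 : ι → ℝ,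
      (A - σ • (1 : Matrix ι ι ℝ)) *ᵥ x1 = (A - σ • (1 : Matrix ι ι ℝ)) *ᵥ y ∧
      (A - σ • (1 : Matrix ι ι ℝ)) *ᵥ x2 = (A - σ • (1 : Matrix ι ι ℝ)) *ᵥ y ∧
      x1 ⬝ᵥ x1 = Δ ∧ x2 ⬝ᵥ x2 = Δ ∧ (b ⬝ᵥ x1 - c) * (b ⬝ᵥ x2 - c) < 0 := by
  have hw : w ≠ 0 := by
    rintro rfl
    exact hbw (dotProduct_zero b)
  have hb : ∀ s : ℝ, b ⬝ᵥ (y + s • w) - c = s * (b ⬝ᵥ w) := fun s => by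
    rw [dotProduct_add, dotProduct_smul, smul_eq_mul, hyc, add_sub_cancel_left]
  obtain ⟨s1, hs1, hsphere1⟩ := exists_pos_dotProduct_self_add_smul_eq hyΔ hw
  obtain ⟨s2, hs2, hsphere2⟩ := exists_pos_dotProduct_self_add_smul_eq hyΔ (neg_ne_zero.2 hw)
  rw [smul_neg, ← neg_smul] at hsphere2
  refine ⟨y + s1 • w, y + -s2 • w, sub_smul_one_mulVec_add_smul hAw y s1,
    sub_smul_one_mulVec_add_smul hAw y (-s2), hsphere1, hsphere2, ?_⟩
  rw [hb, hb]
  have : 0 < s1 * s2 * (b ⬝ᵥ w) ^ 2 := by positivity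
  linarith

end Eigenspace

section Gap

variable {n : ℕ} {A : Matrix (Fin n) (Fin n) ℝ} {a b x y w : Fin n → ℝ} {c Δ l1 l2 l σ : ℝ}

theorem IsKKTPoint.exists_of_mulVec_eq_smul
    (hy : IsKKTPoint (A - σ • (1 : Matrix (Fin n) (Fin n) ℝ)) a b c Δ 0 l y) (hyΔ : y ⬝ᵥ y < Δ)
    (hw : w ≠ 0) (hAw : A *ᵥ w = σ • w) (hbw : b ⬝ᵥ w ≤ 0) (hslack : l * (b ⬝ᵥ w) = 0) :
    ∃ x, IsKKTPoint A a b c Δ (-σ) l x := by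
  obtain ⟨s, hs, hsphere⟩ := exists_pos_dotProduct_self_add_smul_eq hyΔ hw
  have hb : b ⬝ᵥ (y + s • w) = b ⬝ᵥ y + s * (b ⬝ᵥ w) := by
    rw [dotProduct_add, dotProduct_smul, smul_eq_mul]
  refine ⟨y + s • w, hsphere.le, ?_, ?_, by rw [hsphere, sub_self, mul_zero], ?_⟩
  · rw [hb]
    linarith [hy.dotProduct_le, mul_nonpos_of_nonneg_of_nonpos hs.le hbw]
  · rw [neg_smul, ← sub_eq_add_neg, sub_smul_one_mulVec_add_smul hAw]
    simpa only [zero_smul, add_zero] using hy.stationary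
  · rw [hb]
    linear_combination hy.halfspace_slack + s * hslack

theorem IsKKTPoint.of_sub_smul_one
    (hy : IsKKTPoint (A - σ • (1 : Matrix (Fin n) (Fin n) ℝ)) a b c Δ (l1 + σ) l2 y)
    (hyΔ : y ⬝ᵥ y = Δ) : IsKKTPoint A a b c Δ l1 l2 y where
  dotProduct_self_le := hy.dotProduct_self_le
  dotProduct_le := hy.dotProduct_le
  stationary := by
    simpa only [add_comm l1, add_smul, ← add_assoc, sub_add_cancel] using hy.stationary
  ball_slack := by rw [hyΔ, sub_self, mul_zero]
  halfspace_slack := hy.halfspace_slack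

theorem IsKKTPoint.multiplier_eq_and_lt
    (hy : IsKKTPoint (A - σ • (1 : Matrix (Fin n) (Fin n) ℝ)) a b c Δ (l1 + σ) l2 y)
    (hno : ¬ ∃ x, IsKKTPoint A a b c Δ l1 l2 x) : l1 = -σ ∧ y ⬝ᵥ y < Δ := by
  have hyΔ : y ⬝ᵥ y < Δ :=
    hy.dotProduct_self_le.lt_of_ne fun h => hno ⟨y, hy.of_sub_smul_one h⟩
  exact ⟨eq_neg_of_add_eq_zero_left
    ((mul_eq_zero.1 hy.ball_slack).resolve_right (sub_neg.2 hyΔ).ne), hyΔ⟩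

theorem IsKKTPoint.multiplier_ne_zero
    (hy : IsKKTPoint (A - σ • (1 : Matrix (Fin n) (Fin n) ℝ)) a b c Δ 0 l y) (hyΔ : y ⬝ᵥ y < Δ)
    (hno : ¬ ∃ x, IsKKTPoint A a b c Δ (-σ) l x) (hw : w ≠ 0) (hAw : A *ᵥ w = σ • w) : l ≠ 0 := by
  rintro rfl
  rcases le_total (b ⬝ᵥ w) 0 with hbw | hbw
  · exact hno (hy.exists_of_mulVec_eq_smul hyΔ hw hAw hbw (zero_mul _))
  · exact hno (hy.exists_of_mulVec_eq_smul hyΔ (neg_ne_zero.2 hw)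
      (by rw [mulVec_neg, hAw, smul_neg]) (by rwa [dotProduct_neg, neg_nonpos]) (zero_mul _))

theorem IsKKTPoint.dotProduct_ne_zero_of_mulVec_eq_smul
    (hy : IsKKTPoint (A - σ • (1 : Matrix (Fin n) (Fin n) ℝ)) a b c Δ 0 l y) (hyΔ : y ⬝ᵥ y < Δ)
    (hno : ¬ ∃ x, IsKKTPoint A a b c Δ (-σ) l x) (hw : w ≠ 0) (hAw : A *ᵥ w = σ • w) :
    b ⬝ᵥ w ≠ 0 :=
  fun hbw => hno (hy.exists_of_mulVec_eq_smul hyΔ hw hAw hbw.le (by rw [hbw, mul_zero]))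

theorem not_exists_isKKTPoint_of_sphere_pair {x1 x2 : Fin n → ℝ}
    (hfin : Module.finrank ℝ (LinearMap.ker (A - σ • (1 : Matrix (Fin n) (Fin n) ℝ)).mulVecLin) = 1)
    (hσ : σ ≠ 0) (hl : l ≠ 0)
    (hx1 : (A - σ • (1 : Matrix (Fin n) (Fin n) ℝ)) *ᵥ x1 = a - (l / 2) • b)
    (hx2 : (A - σ • (1 : Matrix (Fin n) (Fin n) ℝ)) *ᵥ x2 = a - (l / 2) • b)
    (hx1Δ : x1 ⬝ᵥ x1 = Δ) (hx2Δ : x2 ⬝ᵥ x2 = Δ) (hprod : (b ⬝ᵥ x1 - c) * (b ⬝ᵥ x2 - c) < 0) :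
    ¬ ∃ x, IsKKTPoint A a b c Δ (-σ) l x := by
  rintro ⟨x, hx⟩
  have hxΔ : x ⬝ᵥ x = Δ := hx.dotProduct_self_eq (neg_ne_zero.2 hσ)
  have hxc : b ⬝ᵥ x = c := hx.dotProduct_eq hl
  have hxstat : (A - σ • (1 : Matrix (Fin n) (Fin n) ℝ)) *ᵥ x = a - (l / 2) • b := by
    simpa only [neg_smul, ← sub_eq_add_neg] using hx.stationary
  have hmem : ∀ z, (A - σ • (1 : Matrix (Fin n) (Fin n) ℝ)) *ᵥ z = a - (l / 2) • b →
      z - x1 ∈ LinearMap.ker (A - σ • (1 : Matrix (Fin n) (Fin n) ℝ)).mulVecLin := fun z hz => by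
    rw [LinearMap.mem_ker, mulVecLin_apply, mulVec_sub, hz, hx1, sub_self]
  have hne : x2 - x1 ≠ 0 := fun h => by
    rw [sub_eq_zero.1 h] at hprod
    exact hprod.not_ge (mul_self_nonneg _)
  obtain ⟨s, hs⟩ := exists_smul_eq_of_finrank_eq_one hfin
    (x := ⟨x2 - x1, hmem x2 hx2⟩) (by simpa using hne) ⟨x - x1, hmem x hxstat⟩
  have hline : x = x1 + s • (x2 - x1) := eq_add_of_sub_eq' (congrArg Subtype.val hs).symm
  rcases eq_zero_or_one_of_dotProduct_self_eq (x := x1) (s := s) hne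
    (by rw [add_sub_cancel, hx1Δ, hx2Δ]) (by rw [← hline, hxΔ, hx1Δ]) with rfl | rfl
  · rw [zero_smul, add_zero] at hline
    simp [← hline, hxc] at hprod
  · rw [one_smul, add_sub_cancel] at hline
    simp [← hline, hxc] at hprod

theorem IsKKTPoint.not_exists_isKKTPoint_iff (hσ : σ ≠ 0) (hw : w ≠ 0) (hAw : A *ᵥ w = σ • w)
    (hy : IsKKTPoint (A - σ • (1 : Matrix (Fin n) (Fin n) ℝ)) a b c Δ (l1 + σ) l2 y) :
    (¬ ∃ x, IsKKTPoint A a b c Δ l1 l2 x) ↔ (l1 = -σ ∧ l2 ≠ 0) ∧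
      Module.finrank ℝ (LinearMap.ker (A - σ • (1 : Matrix (Fin n) (Fin n) ℝ)).mulVecLin) = 1 ∧
      ∃ x1 x2 : Fin n → ℝ,
        (A - σ • (1 : Matrix (Fin n) (Fin n) ℝ)) *ᵥ x1 = a - (l2 / 2) • b ∧
        (A - σ • (1 : Matrix (Fin n) (Fin n) ℝ)) *ᵥ x2 = a - (l2 / 2) • b ∧
        x1 ⬝ᵥ x1 = Δ ∧ x2 ⬝ᵥ x2 = Δ ∧ (b ⬝ᵥ x1 - c) * (b ⬝ᵥ x2 - c) < 0 := by
  constructor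
  · intro hno
    obtain ⟨rfl, hyΔ⟩ := hy.multiplier_eq_and_lt hno
    rw [neg_add_cancel] at hy
    have hl2 : l2 ≠ 0 := hy.multiplier_ne_zero hyΔ hno hw hAw
    have hb u : u ≠ 0 → A *ᵥ u = σ • u → b ⬝ᵥ u ≠ 0 :=
      hy.dotProduct_ne_zero_of_mulVec_eq_smul hyΔ hno
    have hstat : (A - σ • (1 : Matrix (Fin n) (Fin n) ℝ)) *ᵥ y = a - (l2 / 2) • b := by
      simpa only [zero_smul, add_zero] using hy.stationary
    rw [← hstat]
    exact ⟨⟨rfl, hl2⟩, finrank_ker_sub_smul_one_eq_one hw hAw hb,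
      exists_sphere_pair_of_mulVec_eq_smul hAw (hb w hw hAw) hyΔ (hy.dotProduct_eq hl2)⟩
  · rintro ⟨⟨rfl, hl2⟩, hfin, x1, x2, hx1, hx2, hx1Δ, hx2Δ, hprod⟩
    exact not_exists_isKKTPoint_of_sphere_pair hfin hσ hl2 hx1 hx2 hx1Δ hx2Δ hprod

end Gap

theorem stmt13_general {n : ℕ} {A : Matrix (Fin n) (Fin n) ℝ} (hA : A.IsHermitian)
    {a b : Fin n → ℝ} {c Δ : ℝ} (hslater : ∃ x : Fin n → ℝ, x ⬝ᵥ x < Δ ∧ b ⬝ᵥ x < c)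
    {ts ls : ℝ} (hls : 0 ≤ ls)
    (hmax : ∀ t l : ℝ, 0 ≤ l → ktl A a b c Δ t l ≤ ktl A a b c Δ ts ls) :
    pstar A a b c Δ ≠ dstar A a b c Δ ↔
      (lambdaMin (borderD2 A a b ts ls) = lambdaMin A ∧ lambdaMin A < 0 ∧ 0 < ls) ∧
      (eigMult A = 1 ∧
        ∃ x1 x2 : Fin n → ℝ,
          (A - lambdaMin A • (1 : Matrix (Fin n) (Fin n) ℝ)).mulVec x1 = a - (ls / 2) • b ∧
          (A - lambdaMin A • (1 : Matrix (Fin n) (Fin n) ℝ)).mulVec x2 = a - (ls / 2) • b ∧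
          x1 ⬝ᵥ x1 = Δ ∧ x2 ⬝ᵥ x2 = Δ ∧ (b ⬝ᵥ x1 - c) * (b ⬝ᵥ x2 - c) < 0) := by
  rcases le_or_gt 0 (lambdaMin A) with hpsd | hneg
  · exact iff_of_false (not_not.2 <| pstar_eq_dstar_of_posSemidef
      ((posSemidef_iff_lambdaMin_nonneg hA).2 hpsd) hslater) fun h => hpsd.not_gt h.1.2.1
  have := nonempty_of_lambdaMin_neg hneg
  have hΔ : 0 ≤ Δ := hslater.elim fun x hx =>
    (by simpa using dotProduct_star_self_nonneg x : 0 ≤ x ⬝ᵥ x).trans hx.1.le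
  have hd := isDualBound_dstar_of_forall_ktl_le hA hΔ hls
    ((lambdaMin_borderD2_le hA a b ts ls).trans hneg.le) hmax
  obtain ⟨w, hw, hAw⟩ := exists_mulVec_eq_lambdaMin_smul hA
  obtain ⟨y, hy⟩ := exists_isKKTPoint_relaxation hA hslater hneg hd
  rw [ne_eq, pstar_eq_dstar_iff_exists_isKKTPoint hA (hslater.imp fun _ h => ⟨h.1.le, h.2.le⟩) hd,
    hy.not_exists_isKKTPoint_iff hneg.ne hw hAw, neg_inj, hls.lt_iff_ne', and_iff_right hneg,
    eigMult]

/-- Corollary 1, necessary and sufficient condition for failure of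
strong duality of eTRS in terms of an optimal solution of the eigenvalue dual. -/
theorem stmt13 {n : ℕ} (hn : 1 ≤ n) (A : Matrix (Fin n) (Fin n) ℝ) (hA : A.IsHermitian)
    (hnpd : ¬ A.PosDef) (a b : Fin n → ℝ) (c Δ : ℝ) (hΔ : 0 < Δ)
    (hslater : ∃ x : Fin n → ℝ, x ⬝ᵥ x < Δ ∧ b ⬝ᵥ x < c)
    (ts ls : ℝ) (hls : 0 ≤ ls)
    (hmax : ∀ t l : ℝ, 0 ≤ l → ktl A a b c Δ t l ≤ ktl A a b c Δ ts ls) :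
    pstar A a b c Δ ≠ dstar A a b c Δ ↔
      (lambdaMin (borderD2 A a b ts ls) = lambdaMin A ∧ lambdaMin A < 0 ∧ 0 < ls) ∧
      (eigMult A = 1 ∧
        ∃ x1 x2 : Fin n → ℝ,
          (A - lambdaMin A • (1 : Matrix (Fin n) (Fin n) ℝ)).mulVec x1 = a - (ls / 2) • b ∧
          (A - lambdaMin A • (1 : Matrix (Fin n) (Fin n) ℝ)).mulVec x2 = a - (ls / 2) • b ∧
          x1 ⬝ᵥ x1 = Δ ∧ x2 ⬝ᵥ x2 = Δ ∧ (b ⬝ᵥ x1 - c) * (b ⬝ᵥ x2 - c) < 0) :=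
  stmt13_general hA hslater hls hmax
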